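/- Let X = {1,2} and define, by mutual recursion on words over X, the maps a and b from X* to itself: a(∅) = ∅, a(1w) = 1·b(w), a(2w) = 2·w; b(∅) = ∅, b(1w) = 2·a(w), b(2w) = 1·w. Then a and b are automorphisms of the rooted binary tree T(X) (length- and prefix-preserving bijections of X*), and the Basilica group B, defined as the subgroup of Aut(T(X)) generated by a and b, is amenable: B satisfies Reiter's condition, i.e. there exists a sequence (λ_n) of probability measures on B with ‖gλ_n − λ_n‖ → 0 for every g ∈ B. -/

import Mathlib

open Filter Topology

/-- The automorphism group of the rooted homogeneous tree `T(X)` on the vertex set `X*`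
of finite words over `X`: permutations of `X*` preserving word length and preserving the
prefix relation in both directions, as a subgroup of `Equiv.Perm (List X)`. -/
def treeAutSubgroup (X : Type*) : Subgroup (Equiv.Perm (List X)) where
  carrier := {f | (∀ w, (f w).length = w.length) ∧
    ∀ w w', w <+: w' ↔ f w <+: f w'}
  one_mem' := ⟨fun _ => rfl, fun _ _ => Iff.rfl⟩
  mul_mem' := by
    rintro f g ⟨hf1, hf2⟩ ⟨hg1, hg2⟩
    refine ⟨fun w => ?_, fun w w' => ?_⟩
    · simpa using (hf1 (g w)).trans (hg1 w)
    · simpa using (hg2 w w').trans (hf2 (g w) (g w'))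
  inv_mem' := by
    rintro f ⟨hf1, hf2⟩
    refine ⟨fun w => ?_, fun w w' => ?_⟩
    · have := hf1 (f⁻¹ w)
      simpa using this.symm
    · have := hf2 (f⁻¹ w) (f⁻¹ w')
      simpa using this.symm

/-- The group of automorphisms of the rooted tree `T(X)`. -/
abbrev TreeAut (X : Type*) := ↥(treeAutSubgroup X)

mutual
  /-- The first generator `a` of the Basilica group, acting on words over the two-letter
  alphabet `{1,2} ≃ Fin 2` by the wreath recursion `a(1w) = 1·b(w)`, `a(2w) = 2·w`. -/
  def basilicaA : List (Fin 2) → List (Fin 2)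
    | [] => []
    | x :: w => if x = 0 then 0 :: basilicaB w else 1 :: w
  /-- The second generator `b` of the Basilica group, acting by the wreath recursion
  `b(1w) = 2·a(w)`, `b(2w) = 1·w`. -/
  def basilicaB : List (Fin 2) → List (Fin 2)
    | [] => []
    | x :: w => if x = 0 then 1 :: basilicaA w else 0 :: w
end

/-- A probability measure on a countable discrete group `G`:
a nonnegative function summing to `1`. -/
def IsProbMeasure {G : Type*} (μ : G → ℝ) : Prop :=
  (∀ g, 0 ≤ μ g) ∧ HasSum μ 1

/-- Reiter's condition: there is a sequence of probability measures `λ_n` on `G` with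
`‖g λ_n − λ_n‖ → 0` for every `g ∈ G` (ℓ¹ norm). -/
def ReiterCondition (G : Type*) [Group G] : Prop :=
  ∃ lam : ℕ → G → ℝ, (∀ n, IsProbMeasure (lam n)) ∧
    ∀ g : G, Tendsto (fun n => ∑' h, |lam n (g⁻¹ * h) - lam n h|) atTop (𝓝 0)

/-!
A group generated by `S` is amenable as soon as, for every `ε > 0`, it carries a potential `U` with
`∑ g, exp (-U g) < ∞` and second differences `U (s g) + U (s⁻¹ g) - 2 U g ≤ ε` for `s ∈ S`: the
normalised Gibbs measure `exp (-U)` and its translate by `s` then have Hellinger affinity at least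
`1 - ε / 4`, so their `ℓ¹` distance is at most `√(2 ε)`.

Since balls grow at most exponentially, a multiple of the word length is such a potential for some
`ε`. The Basilica group has a self-similarity that improves it. Write `g = (x, y) σ`, so that left
multiplication by `a` sends `(x, y)` to `(b x, y)` and left multiplication by `b` sends it to
`(y, a x)`, and put `V g = U x + (U y + U (a⁻¹ y)) / 2`. Then `∑ g, exp (-V g)` is again finite,
because `g` is determined by `x`, `y` and `σ`, and the second differences of `V` at `g` along `a`
and `b` are those of `U` at `x` along `b` and, halved, along `a`. Two such steps halve `ε`.
-/

open scoped Pointwise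

section WordLength

variable {M : Type*} [Monoid M] {T : Set M}

/-- The length of a shortest word with letters in `T` and product `g`; it is `0` if there is no
such word. -/
noncomputable def wordLength (T : Set M) (g : M) : ℕ :=
  sInf {n | g ∈ T ^ n}

lemma exists_mem_pow_of_mem_closure {g : M} (hg : g ∈ Submonoid.closure T) : ∃ n, g ∈ T ^ n := by
  induction hg using Submonoid.closure_induction with
  | mem t ht => exact ⟨1, by rwa [pow_one]⟩
  | one => exact ⟨0, by simp⟩
  | mul g h _ _ ihg ihh =>
    obtain ⟨m, hm⟩ := ihg
    obtain ⟨n, hn⟩ := ihh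
    exact ⟨m + n, pow_add T m n ▸ Set.mul_mem_mul hm hn⟩

lemma mem_pow_wordLength {g : M} (hg : g ∈ Submonoid.closure T) : g ∈ T ^ wordLength T g :=
  Nat.sInf_mem (exists_mem_pow_of_mem_closure hg)

lemma wordLength_mul_le_succ {t g : M} (ht : t ∈ T) (hg : g ∈ Submonoid.closure T) :
    wordLength T (t * g) ≤ wordLength T g + 1 :=
  Nat.sInf_le <| show t * g ∈ T ^ (wordLength T g + 1) from
    pow_succ' T _ ▸ Set.mul_mem_mul ht (mem_pow_wordLength hg)

lemma summable_pow_wordLength {T : Finset M} (hT : Submonoid.closure (T : Set M) = ⊤) {r : ℝ}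
    (hr₀ : 0 ≤ r) (hr : T.card * r < 1) : Summable fun g => r ^ wordLength (T : Set M) g := by
  classical
  have hwords : Summable fun p : Σ n, ↥(T ^ n) => r ^ p.1 := by
    refine (summable_sigma_of_nonneg fun _ => by positivity).2 ⟨fun _ => .of_finite, ?_⟩
    refine .of_nonneg_of_le (fun _ => tsum_nonneg fun _ => by positivity) (fun n => ?_)
      (summable_geometric_of_lt_one (by positivity) hr)
    calc ∑' _ : ↥(T ^ n), r ^ n = (T ^ n).card * r ^ n := by simp
      _ ≤ T.card ^ n * r ^ n := by gcongr; exact mod_cast Finset.card_pow_le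
      _ = (T.card * r) ^ n := (mul_pow _ _ n).symm
  have hmem (g : M) : g ∈ T ^ wordLength (T : Set M) g := by
    have := mem_pow_wordLength (hT ▸ Submonoid.mem_top g)
    rwa [← Finset.coe_pow, Finset.mem_coe] at this
  have hinj : Function.Injective
      fun g => (⟨wordLength (T : Set M) g, g, hmem g⟩ : Σ n, ↥(T ^ n)) :=
    Function.LeftInverse.injective (g := fun p => (p.2 : M)) fun _ => rfl
  exact hwords.comp_injective hinj

end WordLength

section Displacement

variable {G : Type*} [Group G]

lemma hasSum_comp_mul_left {f : G → ℝ} {c : ℝ} (hf : HasSum f c) (s : G) :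
    HasSum (fun g => f (s * g)) c :=
  (Equiv.mulLeft s).hasSum_iff.2 hf

/-- The `ℓ¹` distance `‖g f - f‖` by which left translation by `g` moves `f`. -/
noncomputable def displacement (f : G → ℝ) (g : G) : ℝ :=
  ∑' h, |f (g⁻¹ * h) - f h|

variable {f : G → ℝ}

lemma displacement_nonneg (f : G → ℝ) (g : G) : 0 ≤ displacement f g :=
  tsum_nonneg fun _ => abs_nonneg _

lemma displacement_one (f : G → ℝ) : displacement f 1 = 0 := by
  simp [displacement]

lemma displacement_inv (f : G → ℝ) (g : G) : displacement f g⁻¹ = displacement f g := by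
  unfold displacement
  rw [← (Equiv.mulLeft g⁻¹).tsum_eq]
  simp [abs_sub_comm]

lemma hasSum_displacement (hf : Summable f) (g : G) :
    HasSum (fun h => |f (g⁻¹ * h) - f h|) (displacement f g) :=
  ((hasSum_comp_mul_left hf.hasSum g⁻¹).summable.sub hf).abs.hasSum

lemma displacement_mul_le (hf : Summable f) (g h : G) :
    displacement f (g * h) ≤ displacement f g + displacement f h := by
  refine hasSum_le (fun k => ?_) (hasSum_displacement hf (g * h))
    ((hasSum_displacement hf g).add (hasSum_comp_mul_left (hasSum_displacement hf h) g⁻¹))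
  rw [mul_inv_rev, mul_assoc, add_comm]
  exact abs_sub_le _ _ _

lemma tendsto_displacement_of_closure {ι : Type*} {l : Filter ι} {S : Set G} {f : ι → G → ℝ}
    (hf : ∀ i, Summable (f i)) (hS : ∀ s ∈ S, Tendsto (fun i => displacement (f i) s) l (𝓝 0))
    {g : G} (hg : g ∈ Subgroup.closure S) :
    Tendsto (fun i => displacement (f i) g) l (𝓝 0) := by
  induction hg using Subgroup.closure_induction with
  | mem s hs => exact hS s hs
  | one => simpa only [displacement_one] using tendsto_const_nhds
  | mul g h _ _ ihg ihh =>
    exact squeeze_zero (fun i => displacement_nonneg _ _)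
      (fun i => displacement_mul_le (hf i) g h) (by simpa using ihg.add ihh)
  | inv g _ ih => simpa only [displacement_inv] using ih

end Displacement

lemma summable_mul_comp_of_injective {γ ι ι' κ : Type*} [Finite κ] {f : ι → ℝ} {f' : ι' → ℝ}
    (hf : Summable f) (hf' : Summable f') (hf₀ : 0 ≤ f) (hf'₀ : 0 ≤ f') {Φ : γ → ι × ι' × κ}
    (hΦ : Function.Injective Φ) : Summable fun i => f (Φ i).1 * f' (Φ i).2.1 := by
  have hκ : Summable fun p : ι' × κ => f' p.1 * 1 :=
    hf'.mul_of_nonneg .of_finite hf'₀ fun _ => zero_le_one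
  simpa using! (hf.mul_of_nonneg hκ hf₀ fun p => by simpa using hf'₀ p.1).comp_injective hΦ

section Hellinger

variable {ι : Type*} {f g : ι → ℝ}

lemma summable_mul_of_sq (hf : Summable fun i => f i ^ 2) (hg : Summable fun i => g i ^ 2) :
    Summable fun i => f i * g i := by
  refine .of_norm_bounded (hf.add hg) fun i => ?_
  rw [Real.norm_eq_abs, abs_le]
  constructor <;> nlinarith [sq_nonneg (f i + g i), sq_nonneg (f i - g i)]

lemma sq_tsum_abs_mul_le (hf : Summable fun i => f i ^ 2) (hg : Summable fun i => g i ^ 2) :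
    (∑' i, |f i * g i|) ^ 2 ≤ (∑' i, f i ^ 2) * ∑' i, g i ^ 2 := by
  have h := Real.inner_le_Lp_mul_Lq_tsum_of_nonneg (f := fun i => |f i|) (g := fun i => |g i|)
    Real.HolderConjugate.two_two (fun _ => abs_nonneg _) (fun _ => abs_nonneg _)
    (by simpa using hf) (by simpa using hg)
  simp only [Real.rpow_ofNat, sq_abs, ← Real.sqrt_eq_rpow, ← abs_mul] at h
  calc (∑' i, |f i * g i|) ^ 2
      ≤ (√(∑' i, f i ^ 2) * √(∑' i, g i ^ 2)) ^ 2 :=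
        pow_le_pow_left₀ (tsum_nonneg fun _ => abs_nonneg _) h 2
    _ = (∑' i, f i ^ 2) * ∑' i, g i ^ 2 := by
        rw [mul_pow, Real.sq_sqrt (tsum_nonneg fun _ => sq_nonneg _),
          Real.sq_sqrt (tsum_nonneg fun _ => sq_nonneg _)]

lemma sq_tsum_abs_sq_sub_sq_le (hf : HasSum (fun i => f i ^ 2) 1)
    (hg : HasSum (fun i => g i ^ 2) 1) :
    (∑' i, |f i ^ 2 - g i ^ 2|) ^ 2 ≤ 4 * (1 - (∑' i, f i * g i) ^ 2) := by
  have hfg : HasSum (fun i => 2 * (f i * g i)) (2 * ∑' i, f i * g i) :=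
    (summable_mul_of_sq hf.summable hg.summable).hasSum.mul_left 2
  have hadd : HasSum (fun i => (f i + g i) ^ 2) (1 + 1 + 2 * ∑' i, f i * g i) :=
    ((hf.add hg).add hfg).congr_fun fun i => by ring
  have hsub : HasSum (fun i => (f i - g i) ^ 2) (1 + 1 - 2 * ∑' i, f i * g i) :=
    ((hf.add hg).sub hfg).congr_fun fun i => by ring
  calc (∑' i, |f i ^ 2 - g i ^ 2|) ^ 2
      = (∑' i, |(f i + g i) * (f i - g i)|) ^ 2 := by simp only [sq_sub_sq]
    _ ≤ (∑' i, (f i + g i) ^ 2) * ∑' i, (f i - g i) ^ 2 :=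
        sq_tsum_abs_mul_le hadd.summable hsub.summable
    _ = 4 * (1 - (∑' i, f i * g i) ^ 2) := by
        rw [hadd.tsum_eq, hsub.tsum_eq]
        ring

end Hellinger

section Potential

variable {G : Type*} [Group G] {S : Set G} {U : G → ℝ} {ε : ℝ}

/-- The second difference of `U` at `g` along left multiplication by `s`. -/
def secondDiff (s : G) (U : G → ℝ) (g : G) : ℝ :=
  U (s * g) + U (s⁻¹ * g) - 2 * U g

/-- There is a potential `U` on `G` with finite partition function `∑ g, exp (-U g)` whose second
differences along the elements of `S` are at most `ε`. -/
def HasPotential (S : Set G) (ε : ℝ) : Prop :=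
  ∃ U : G → ℝ, Summable (fun g => Real.exp (-U g)) ∧ ∀ s ∈ S, ∀ g, secondDiff s U g ≤ ε

lemma exists_hasPotential (hS : S.Finite) (hgen : Subgroup.closure S = ⊤) :
    ∃ K, HasPotential S K := by
  obtain ⟨T, hT⟩ : ∃ T : Finset G, (T : Set G) = S ∪ S⁻¹ :=
    (hS.union hS.inv).exists_finset_coe
  have hTgen : Submonoid.closure (T : Set G) = ⊤ := by
    rw [hT, ← Subgroup.closure_toSubmonoid, hgen, Subgroup.top_toSubmonoid]
  have hlength {t : G} (ht : t ∈ S ∪ S⁻¹) (g : G) :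
      (wordLength (T : Set G) (t * g) : ℝ) ≤ wordLength (T : Set G) g + 1 :=
    mod_cast wordLength_mul_le_succ (hT ▸ ht) (hTgen ▸ Submonoid.mem_top g)
  set c := Real.log (T.card + 1)
  have hexp : Real.exp (-c) = (T.card + 1 : ℝ)⁻¹ := by
    rw [Real.exp_neg, Real.exp_log (by positivity)]
  refine ⟨2 * c, fun g => c * wordLength (T : Set G) g, ?_, fun s hs g => ?_⟩
  · have hr : T.card * Real.exp (-c) < 1 := by
      rw [hexp, ← div_eq_mul_inv, div_lt_one (by positivity)]
      exact lt_add_one _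
    convert summable_pow_wordLength hTgen (Real.exp_pos _).le hr using 2 with g
    rw [← Real.exp_nat_mul]
    ring_nf
  · have hc : 0 ≤ c := Real.log_nonneg (by simp)
    have h₁ := mul_le_mul_of_nonneg_left (hlength (.inl hs) g) hc
    have h₂ := mul_le_mul_of_nonneg_left (hlength (.inr (Set.inv_mem_inv.2 hs)) g) hc
    rw [secondDiff]
    linarith

lemma HasPotential.exists_hasSum_one (h : HasPotential S ε) :
    ∃ U : G → ℝ, HasSum (fun g => Real.exp (-U g)) 1 ∧ ∀ s ∈ S, ∀ g, secondDiff s U g ≤ ε := by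
  obtain ⟨U, hU, hdiff⟩ := h
  set Z := ∑' g, Real.exp (-U g)
  have hZ : 0 < Z := hU.tsum_pos (fun _ => (Real.exp_pos _).le) 1 (Real.exp_pos _)
  refine ⟨fun g => U g + Real.log Z, ?_, fun s hs g => ?_⟩
  · simp only [neg_add, Real.exp_add, Real.exp_neg (Real.log Z), Real.exp_log hZ]
    exact mul_inv_cancel₀ hZ.ne' ▸ hU.hasSum.mul_right Z⁻¹
  · have := hdiff s hs g
    simp only [secondDiff] at this ⊢
    linarith

lemma sq_exp_neg_half (u : ℝ) : Real.exp (-u / 2) ^ 2 = Real.exp (-u) := by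
  rw [← Real.exp_nat_mul]
  ring_nf

lemma mul_exp_neg_le_exp_mul_add_exp_mul (s g : G) :
    (2 - secondDiff s U g / 2) * Real.exp (-U g) ≤
      Real.exp (-U (s * g) / 2) * Real.exp (-U g / 2) +
        Real.exp (-U (s⁻¹ * g) / 2) * Real.exp (-U g / 2) := by
  have hle (v u : ℝ) :
      (1 - (v - u) / 2) * Real.exp (-u) ≤ Real.exp (-v / 2) * Real.exp (-u / 2) := by
    calc (1 - (v - u) / 2) * Real.exp (-u)
        ≤ Real.exp (-((v - u) / 2)) * Real.exp (-u) := by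
          gcongr
          linarith [Real.add_one_le_exp (-((v - u) / 2))]
      _ = Real.exp (-v / 2) * Real.exp (-u / 2) := by
          rw [← Real.exp_add, ← Real.exp_add]
          ring_nf
  have h₁ := hle (U (s * g)) (U g)
  have h₂ := hle (U (s⁻¹ * g)) (U g)
  rw [secondDiff]
  linarith

lemma one_sub_le_tsum_exp_mul (hU : HasSum (fun g => Real.exp (-U g)) 1) {s : G}
    (hs : ∀ g, secondDiff s U g ≤ ε) :
    1 - ε / 4 ≤ ∑' g, Real.exp (-U (s⁻¹ * g) / 2) * Real.exp (-U g / 2) := by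
  set α : G → ℝ := fun g => Real.exp (-U g / 2) with hα
  have hα_sq (t : G) : Summable fun g => α (t * g) ^ 2 := by
    simpa only [hα, sq_exp_neg_half] using (hasSum_comp_mul_left hU t).summable
  have hinv : HasSum (fun g => α (s⁻¹ * g) * α g) (∑' g, α (s⁻¹ * g) * α g) :=
    (summable_mul_of_sq (hα_sq s⁻¹) (by simpa using hα_sq 1)).hasSum
  have hmul : HasSum (fun g => α (s * g) * α g) (∑' g, α (s⁻¹ * g) * α g) := by
    simpa [mul_comm] using hasSum_comp_mul_left hinv s
  have hle : (2 - ε / 2) * 1 ≤ ∑' g, α (s⁻¹ * g) * α g + ∑' g, α (s⁻¹ * g) * α g := by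
    refine hasSum_le (fun g => ?_) (hU.mul_left _) (hmul.add hinv)
    refine le_trans ?_ (mul_exp_neg_le_exp_mul_add_exp_mul s g)
    gcongr
    exact hs g
  linarith

lemma displacement_exp_neg_le (hU : HasSum (fun g => Real.exp (-U g)) 1) {s : G}
    (hs : ∀ g, secondDiff s U g ≤ ε) :
    displacement (fun g => Real.exp (-U g)) s ≤ √(2 * ε) := by
  have haffinity := one_sub_le_tsum_exp_mul hU hs
  have hle := sq_tsum_abs_sq_sub_sq_le (f := fun g => Real.exp (-U (s⁻¹ * g) / 2))
    (g := fun g => Real.exp (-U g / 2))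
    (by simpa only [sq_exp_neg_half] using hasSum_comp_mul_left hU s⁻¹)
    (by simpa only [sq_exp_neg_half] using hU)
  simp only [sq_exp_neg_half] at hle
  set c := ∑' g, Real.exp (-U (s⁻¹ * g) / 2) * Real.exp (-U g / 2)
  refine Real.le_sqrt_of_sq_le (hle.trans ?_)
  nlinarith [sq_nonneg (1 - c)]

lemma reiterCondition_of_hasPotential (hgen : Subgroup.closure S = ⊤)
    (h : ∀ ε > 0, HasPotential S ε) : ReiterCondition G := by
  choose U hU hdiff using fun n : ℕ =>
    (h (1 / ((n : ℝ) + 1)) (by positivity)).exists_hasSum_one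
  refine ⟨fun n g => Real.exp (-U n g), fun n => ⟨fun _ => (Real.exp_pos _).le, hU n⟩, fun g =>
    tendsto_displacement_of_closure (fun n => (hU n).summable) (fun s hs => ?_)
      (hgen ▸ Subgroup.mem_top g)⟩
  refine squeeze_zero (fun n => displacement_nonneg _ _)
    (fun n => displacement_exp_neg_le (hU n) (hdiff n s hs)) ?_
  simpa using ((tendsto_one_div_add_atTop_nhds_zero_nat (𝕜 := ℝ)).const_mul 2).sqrt

end Potential

section BasilicaRecursion

variable {G : Type*} [Group G] {a b : G} {φ₀ φ₁ : G → G} {σ : G → Equiv.Perm (Fin 2)}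
  {U : G → ℝ} {ε : ℝ}

/-- The map `g ↦ (φ₀ g, φ₁ g) σ g` behaves as the faithful wreath recursion with `a ↦ (b, 1)` and
`b ↦ (1, a) (0 1)`, the sections `φ₀ g`, `φ₁ g` being indexed by the letter on which they arrive. -/
structure IsBasilicaRecursion (a b : G) (φ₀ φ₁ : G → G) (σ : G → Equiv.Perm (Fin 2)) : Prop where
  injective : Function.Injective fun g => (φ₀ g, φ₁ g, σ g)
  left_a_mul : ∀ g, φ₀ (a * g) = b * φ₀ g
  right_a_mul : ∀ g, φ₁ (a * g) = φ₁ g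
  left_b_mul : ∀ g, φ₀ (b * g) = φ₁ g
  right_b_mul : ∀ g, φ₁ (b * g) = a * φ₀ g

/-- The potential `g ↦ U (φ₀ g) + (U (φ₁ g) + U (a⁻¹ * φ₁ g)) / 2` obtained by superposing `U`
along the wreath recursion. Averaging the second summand over `φ₁ g` and `a⁻¹ * φ₁ g`, which are
what `b` and `b⁻¹` move to the first coordinate, makes its contribution to the second difference
along `b` cancel. -/
noncomputable def basilicaLift (a : G) (φ₀ φ₁ : G → G) (U : G → ℝ) (g : G) : ℝ :=
  U (φ₀ g) + (U (φ₁ g) + U (a⁻¹ * φ₁ g)) / 2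

namespace IsBasilicaRecursion

lemma left_a_inv_mul (h : IsBasilicaRecursion a b φ₀ φ₁ σ) (g : G) :
    φ₀ (a⁻¹ * g) = b⁻¹ * φ₀ g := by
  rw [eq_inv_mul_iff_mul_eq, ← h.left_a_mul, mul_inv_cancel_left]

lemma right_a_inv_mul (h : IsBasilicaRecursion a b φ₀ φ₁ σ) (g : G) : φ₁ (a⁻¹ * g) = φ₁ g := by
  rw [← h.right_a_mul, mul_inv_cancel_left]

lemma left_b_inv_mul (h : IsBasilicaRecursion a b φ₀ φ₁ σ) (g : G) :
    φ₀ (b⁻¹ * g) = a⁻¹ * φ₁ g := by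
  rw [eq_inv_mul_iff_mul_eq, ← h.right_b_mul, mul_inv_cancel_left]

lemma right_b_inv_mul (h : IsBasilicaRecursion a b φ₀ φ₁ σ) (g : G) : φ₁ (b⁻¹ * g) = φ₀ g := by
  rw [← h.left_b_mul, mul_inv_cancel_left]

lemma secondDiff_a_basilicaLift (h : IsBasilicaRecursion a b φ₀ φ₁ σ) (U : G → ℝ) (g : G) :
    secondDiff a (basilicaLift a φ₀ φ₁ U) g = secondDiff b U (φ₀ g) := by
  simp only [secondDiff, basilicaLift, h.left_a_mul, h.right_a_mul, h.left_a_inv_mul,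
    h.right_a_inv_mul]
  ring

lemma secondDiff_b_basilicaLift (h : IsBasilicaRecursion a b φ₀ φ₁ σ) (U : G → ℝ) (g : G) :
    secondDiff b (basilicaLift a φ₀ φ₁ U) g = secondDiff a U (φ₀ g) / 2 := by
  simp only [secondDiff, basilicaLift, h.left_b_mul, h.right_b_mul, h.left_b_inv_mul,
    h.right_b_inv_mul, inv_mul_cancel_left]
  ring

lemma summable_exp_neg_basilicaLift (h : IsBasilicaRecursion a b φ₀ φ₁ σ)
    (hU : Summable fun g => Real.exp (-U g)) :
    Summable fun g => Real.exp (-basilicaLift a φ₀ φ₁ U g) := by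
  have hshift : Summable fun g => Real.exp (-U (a⁻¹ * g)) :=
    (hasSum_comp_mul_left hU.hasSum a⁻¹).summable
  refine .of_nonneg_of_le (fun _ => (Real.exp_pos _).le) (fun g => ?_)
    (summable_mul_comp_of_injective hU (hU.add hshift) (fun _ => (Real.exp_pos _).le)
      (fun _ => by positivity) h.injective)
  have hmean := two_mul_le_add_sq (Real.exp (-U (φ₁ g) / 2)) (Real.exp (-U (a⁻¹ * φ₁ g) / 2))
  rw [sq_exp_neg_half, sq_exp_neg_half, mul_assoc, ← Real.exp_add] at hmean
  rw [basilicaLift, neg_add, Real.exp_add]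
  gcongr
  rw [show -((U (φ₁ g) + U (a⁻¹ * φ₁ g)) / 2) = -U (φ₁ g) / 2 + -U (a⁻¹ * φ₁ g) / 2 by ring]
  linarith [Real.exp_pos (-U (φ₁ g) / 2 + -U (a⁻¹ * φ₁ g) / 2)]

lemma hasPotential_half (h : IsBasilicaRecursion a b φ₀ φ₁ σ) (hε : HasPotential {a, b} ε) :
    HasPotential {a, b} (ε / 2) := by
  obtain ⟨U, hU, hdiff⟩ := hε
  set L := basilicaLift a φ₀ φ₁
  refine ⟨L (L U), h.summable_exp_neg_basilicaLift (h.summable_exp_neg_basilicaLift hU), ?_⟩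
  rintro s (rfl | rfl) g
  · rw [h.secondDiff_a_basilicaLift, h.secondDiff_b_basilicaLift]
    linarith [hdiff s (by simp) (φ₀ (φ₀ g))]
  · rw [h.secondDiff_b_basilicaLift, h.secondDiff_a_basilicaLift]
    linarith [hdiff s (by simp) (φ₀ (φ₀ g))]

lemma hasPotential (h : IsBasilicaRecursion a b φ₀ φ₁ σ) (hgen : Subgroup.closure {a, b} = ⊤)
    (hε : 0 < ε) : HasPotential {a, b} ε := by
  obtain ⟨K, hK⟩ := exists_hasPotential (Set.toFinite {a, b}) hgen
  have hpow (n : ℕ) : HasPotential {a, b} (K * (1 / 2) ^ n) := by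
    induction n with
    | zero => simpa using hK
    | succ n ih => simpa [pow_succ, div_eq_mul_inv, mul_assoc] using h.hasPotential_half ih
  have hlim : Tendsto (fun n : ℕ => K * (1 / 2 : ℝ) ^ n) atTop (𝓝 0) := by
    simpa using (tendsto_pow_atTop_nhds_zero_of_lt_one (r := (1 / 2 : ℝ))
      (by norm_num) (by norm_num)).const_mul K
  obtain ⟨n, hn⟩ := (hlim.eventually_lt_const hε).exists
  obtain ⟨U, hU, hdiff⟩ := hpow n
  exact ⟨U, hU, fun s hs g => (hdiff s hs g).trans hn.le⟩

theorem reiterCondition (h : IsBasilicaRecursion a b φ₀ φ₁ σ)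
    (hgen : Subgroup.closure {a, b} = ⊤) : ReiterCondition G :=
  reiterCondition_of_hasPotential hgen fun _ hε => h.hasPotential hgen hε

end IsBasilicaRecursion

end BasilicaRecursion

section WreathRecursion

variable {G X : Type*} [Group G] [MulAction G (List X)] {g h : G} {σ τ : Equiv.Perm X}
  {φ ψ : X → G}

/-- The wreath recursion `g = φ σ` of an element acting on words: `g` permutes first letters by
`σ` and acts on the rest of a word as `φ y`, where `y` is the *new* first letter. With this
indexing, left multiplication by a generator multiplies the sections by fixed elements. -/
def HasWreathRecursion (g : G) (σ : Equiv.Perm X) (φ : X → G) : Prop :=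
  ∀ x w, g • (x :: w) = σ x :: φ (σ x) • w

namespace HasWreathRecursion

lemma one : HasWreathRecursion (1 : G) (1 : Equiv.Perm X) 1 := fun x w => by simp

lemma mul (hg : HasWreathRecursion g σ φ) (hh : HasWreathRecursion h τ ψ) :
    HasWreathRecursion (g * h) (σ * τ) fun y => φ y * ψ (σ⁻¹ y) := fun x w => by
  simp [mul_smul, hh x w, hg (τ x)]

lemma inv (hg : HasWreathRecursion g σ φ) :
    HasWreathRecursion g⁻¹ σ⁻¹ fun x => (φ (σ x))⁻¹ := fun y w => by
  rw [inv_smul_eq_iff, hg]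
  simp

variable [FaithfulSMul G (List X)]

lemma unique (hσ : HasWreathRecursion g σ φ) (hτ : HasWreathRecursion g τ ψ) :
    σ = τ ∧ φ = ψ := by
  have heq (x : X) (w : List X) : σ x = τ x ∧ φ (σ x) • w = ψ (τ x) • w := by
    simpa [List.cons_eq_cons] using (hσ x w).symm.trans (hτ x w)
  have hperm : σ = τ := Equiv.ext fun x => (heq x []).1
  subst hperm
  refine ⟨rfl, funext fun y => eq_of_smul_eq_smul (α := List X) fun w => ?_⟩
  simpa using (heq (σ⁻¹ y) w).2

lemma eq_of_smul_nil (hg : HasWreathRecursion g σ φ) (hh : HasWreathRecursion h σ φ)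
    (hnil : g • ([] : List X) = h • []) : g = h :=
  eq_of_smul_eq_smul fun
    | [] => hnil
    | x :: w => (hg x w).trans (hh x w).symm

end HasWreathRecursion

lemma exists_hasWreathRecursion_of_closure {S : Set G}
    (hS : ∀ s ∈ S, ∃ (σ : Equiv.Perm X) (φ : X → G), HasWreathRecursion s σ φ)
    (hg : g ∈ Subgroup.closure S) :
    ∃ (σ : Equiv.Perm X) (φ : X → G), HasWreathRecursion g σ φ := by
  induction hg using Subgroup.closure_induction with
  | mem s hs => exact hS s hs
  | one => exact ⟨1, 1, .one⟩
  | mul g h _ _ ihg ihh =>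
    obtain ⟨σ, φ, hg⟩ := ihg
    obtain ⟨τ, ψ, hh⟩ := ihh
    exact ⟨_, _, hg.mul hh⟩
  | inv g _ ih =>
    obtain ⟨σ, φ, hg⟩ := ih
    exact ⟨_, _, hg.inv⟩

end WreathRecursion

section TreeAut

variable {X : Type*} {f : List X → List X}

lemma injective_of_prefix_iff (hlen : ∀ w, (f w).length = w.length)
    (hpre : ∀ w w', w <+: w' ↔ f w <+: f w') : Function.Injective f := fun w w' h =>
  ((hpre w w').2 (h ▸ List.prefix_rfl)).eq_of_length (by rw [← hlen w, ← hlen w', h])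

/-- The tree automorphism given by a surjection of `X*` that preserves lengths and the prefix
relation. -/
noncomputable def TreeAut.ofSurjective (f : List X → List X)
    (hlen : ∀ w, (f w).length = w.length) (hpre : ∀ w w', w <+: w' ↔ f w <+: f w')
    (hsurj : Function.Surjective f) : TreeAut X :=
  ⟨.ofBijective f ⟨injective_of_prefix_iff hlen hpre, hsurj⟩, hlen, hpre⟩

lemma TreeAut.smul_nil (g : TreeAut X) : g • ([] : List X) = [] :=
  List.length_eq_zero_iff.1 (g.2.1 [])

end TreeAut

section Generators

@[simp] lemma basilicaA_nil : basilicaA [] = [] := by simp [basilicaA]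

@[simp] lemma basilicaB_nil : basilicaB [] = [] := by simp [basilicaB]

@[simp] lemma basilicaA_zero_cons (w : List (Fin 2)) : basilicaA (0 :: w) = 0 :: basilicaB w := by
  simp [basilicaA]

@[simp] lemma basilicaA_one_cons (w : List (Fin 2)) : basilicaA (1 :: w) = 1 :: w := by
  simp [basilicaA]

@[simp] lemma basilicaB_zero_cons (w : List (Fin 2)) : basilicaB (0 :: w) = 1 :: basilicaA w := by
  simp [basilicaB]

@[simp] lemma basilicaB_one_cons (w : List (Fin 2)) : basilicaB (1 :: w) = 0 :: w := by
  simp [basilicaB]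

mutual

lemma length_basilicaA : ∀ w, (basilicaA w).length = w.length
  | [] => by simp
  | 0 :: w => by simp [length_basilicaB w]
  | 1 :: w => by simp

lemma length_basilicaB : ∀ w, (basilicaB w).length = w.length
  | [] => by simp
  | 0 :: w => by simp [length_basilicaA w]
  | 1 :: w => by simp

end

mutual

lemma prefix_iff_basilicaA_prefix : ∀ w w', w <+: w' ↔ basilicaA w <+: basilicaA w'
  | [], _ => by simp
  | 0 :: _, [] | 1 :: _, [] => by simp
  | 0 :: w, 0 :: w' => by simp [List.cons_prefix_cons, prefix_iff_basilicaB_prefix w w']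
  | 0 :: _, 1 :: _ | 1 :: _, 0 :: _ | 1 :: _, 1 :: _ => by simp [List.cons_prefix_cons]

lemma prefix_iff_basilicaB_prefix : ∀ w w', w <+: w' ↔ basilicaB w <+: basilicaB w'
  | [], _ => by simp
  | 0 :: _, [] | 1 :: _, [] => by simp
  | 0 :: w, 0 :: w' => by simp [List.cons_prefix_cons, prefix_iff_basilicaA_prefix w w']
  | 0 :: _, 1 :: _ | 1 :: _, 0 :: _ | 1 :: _, 1 :: _ => by simp [List.cons_prefix_cons]

end

mutual

lemma basilicaA_surjective : Function.Surjective basilicaA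
  | [] => ⟨[], basilicaA_nil⟩
  | 0 :: w =>
    let ⟨v, hv⟩ := basilicaB_surjective w
    ⟨0 :: v, by simp [hv]⟩
  | 1 :: w => ⟨1 :: w, basilicaA_one_cons w⟩

lemma basilicaB_surjective : Function.Surjective basilicaB
  | [] => ⟨[], basilicaB_nil⟩
  | 0 :: w => ⟨1 :: w, basilicaB_one_cons w⟩
  | 1 :: w =>
    let ⟨v, hv⟩ := basilicaA_surjective w
    ⟨0 :: v, by simp [hv]⟩

end

end Generators

/-- The generator `a` as a tree automorphism. -/
noncomputable def basilicaAutA : TreeAut (Fin 2) :=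
  .ofSurjective basilicaA length_basilicaA prefix_iff_basilicaA_prefix basilicaA_surjective

/-- The generator `b` as a tree automorphism. -/
noncomputable def basilicaAutB : TreeAut (Fin 2) :=
  .ofSurjective basilicaB length_basilicaB prefix_iff_basilicaB_prefix basilicaB_surjective

/-- The Basilica group. As an abbreviation for a subgroup of `TreeAut (Fin 2)` it inherits the
faithful action on words. -/
abbrev BasilicaGroup : Type := ↥(Subgroup.closure {basilicaAutA, basilicaAutB})

namespace BasilicaGroup

/-- The generator `a` as an element of the Basilica group. -/
noncomputable def a : BasilicaGroup := ⟨basilicaAutA, Subgroup.subset_closure (by simp)⟩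

/-- The generator `b` as an element of the Basilica group. -/
noncomputable def b : BasilicaGroup := ⟨basilicaAutB, Subgroup.subset_closure (by simp)⟩

lemma closure_a_b : Subgroup.closure {a, b} = (⊤ : Subgroup BasilicaGroup) := by
  have h : ({a, b} : Set BasilicaGroup) = Subtype.val ⁻¹' {basilicaAutA, basilicaAutB} := by
    ext g
    simp only [Set.mem_preimage, Set.mem_insert_iff, Set.mem_singleton_iff, Subtype.ext_iff, a, b]
  exact h ▸ Subgroup.closure_closure_coe_preimage

lemma a_smul (w : List (Fin 2)) : a • w = basilicaA w := rfl

lemma b_smul (w : List (Fin 2)) : b • w = basilicaB w := rfl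

lemma hasWreathRecursion_a : HasWreathRecursion a (1 : Equiv.Perm (Fin 2)) ![b, 1] := fun x w => by
  fin_cases x <;> simp [a_smul, b_smul]

lemma hasWreathRecursion_b : HasWreathRecursion b (Equiv.swap (0 : Fin 2) 1) ![1, a] :=
  fun x w => by fin_cases x <;> simp [a_smul, b_smul]

lemma exists_hasWreathRecursion (g : BasilicaGroup) :
    ∃ (σ : Equiv.Perm (Fin 2)) (φ : Fin 2 → BasilicaGroup), HasWreathRecursion g σ φ := by
  refine exists_hasWreathRecursion_of_closure ?_ (closure_a_b ▸ Subgroup.mem_top g)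
  rintro s (rfl | rfl)
  exacts [⟨_, _, hasWreathRecursion_a⟩, ⟨_, _, hasWreathRecursion_b⟩]

lemma exists_isBasilicaRecursion :
    ∃ (φ₀ φ₁ : BasilicaGroup → BasilicaGroup) (σ : BasilicaGroup → Equiv.Perm (Fin 2)),
      IsBasilicaRecursion a b φ₀ φ₁ σ := by
  choose σ φ hφ using exists_hasWreathRecursion
  have hφ_a (g : BasilicaGroup) (y : Fin 2) :
      φ (a * g) y = (![b, 1] : Fin 2 → BasilicaGroup) y * φ g y :=
    congrFun ((hφ _).unique (hasWreathRecursion_a.mul (hφ g))).2 y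
  have hφ_b (g : BasilicaGroup) (y : Fin 2) :
      φ (b * g) y = (![1, a] : Fin 2 → BasilicaGroup) y * φ g (Equiv.swap 0 1 y) :=
    congrFun ((hφ _).unique (hasWreathRecursion_b.mul (hφ g))).2 y
  refine ⟨(φ · 0), (φ · 1), σ, fun g h hgh => ?_, fun g => ?_, fun g => ?_, fun g => ?_,
    fun g => ?_⟩
  · simp only [Prod.mk.injEq] at hgh
    obtain ⟨h₀, h₁, hσ⟩ := hgh
    have hsections : φ g = φ h := funext fun y => by fin_cases y <;> assumption
    have hh := hφ h
    rw [← hsections, ← hσ] at hh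
    exact (hφ g).eq_of_smul_nil hh
      ((TreeAut.smul_nil g.1).trans (TreeAut.smul_nil h.1).symm)
  all_goals simp [hφ_a, hφ_b]

end BasilicaGroup

/-- The maps `a`, `b` given by the Basilica wreath recursion are automorphisms of the
rooted binary tree, and the Basilica group — the subgroup of `Aut(T)` they generate — is
amenable: it satisfies Reiter's condition. -/
theorem basilica_amenable :
    ∃ A B : TreeAut (Fin 2),
      (∀ w, (A : Equiv.Perm (List (Fin 2))) w = basilicaA w) ∧
      (∀ w, (B : Equiv.Perm (List (Fin 2))) w = basilicaB w) ∧
      ReiterCondition ↥(Subgroup.closure {A, B}) := by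
  obtain ⟨φ₀, φ₁, σ, h⟩ := BasilicaGroup.exists_isBasilicaRecursion
  exact ⟨basilicaAutA, basilicaAutB, fun _ => rfl, fun _ => rfl,
    h.reiterCondition BasilicaGroup.closure_a_b⟩
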